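/- For every integer n ≥ 1 and every real number x, the Euler polynomial E_n(x) satisfies E_n(x) = Σ_{k=0}^{n} (−1)^{n−k} C(n, k) [ Σ_{ℓ=1}^{n−k+1} ((−1)^{ℓ−1} (ℓ−1)!/2^{ℓ−1}) S(n−k+1, ℓ) ] x^k. Equivalently, for each real x, the n-th derivative at t = 0 of the function t ↦ 2 e^{x t}/(e^t + 1) equals the right-hand side. -/

import Mathlib

open Real Finset

/-- Stirling numbers of the second kind, real-valued, via the explicit formula
`S(k,m) = (1/m!) ∑_{ℓ=1}^m (-1)^(m-ℓ) C(m,ℓ) ℓ^k`; this gives `0` when `m > k`. -/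
noncomputable def S2 (k m : ℕ) : ℝ :=
  (1 / (Nat.factorial m : ℝ)) *
    ∑ ℓ ∈ Finset.Icc 1 m, (-1 : ℝ) ^ (m - ℓ) * (Nat.choose m ℓ : ℝ) * (ℓ : ℝ) ^ k

/-!
Since `2 * exp (x * t) / (exp t + 1) = 2 * (exp (x * t) * sigmoid (-t))`, the Leibniz rule reduces
the statement to the derivatives of the sigmoid at `0`, where it takes the value `1 / 2`. By the
logistic equation `y' = y * (1 - y)`, each derivative of the sigmoid is a polynomial in the sigmoid,
whose coefficients obey the recurrence of the Stirling numbers of the second kind. The explicit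
formula defining `S2` is an iterated forward difference of a monomial at `0`, and satisfies the same
recurrence by the Leibniz rule for differences.
-/

lemma fwdDiff_iter_id_smul {R G : Type*} [Ring R] [AddCommGroup G] [Module R G] (h : R) (f : R → G)
    (n : ℕ) (y : R) :
    (fwdDiff h)^[n + 1] (fun r ↦ r • f r) y =
      (y + (n + 1) * h) • (fwdDiff h)^[n + 1] f y + ((n + 1) * h) • (fwdDiff h)^[n] f y := by
  induction n generalizing y with
  | zero =>
    simp only [zero_add, Function.iterate_one, Function.iterate_zero, id_eq, fwdDiff,
      Nat.cast_zero, one_mul, smul_sub, add_smul]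
    abel
  | succ n ih =>
    rw [Function.iterate_succ_apply', fwdDiff, ih, ih]
    simp only [Function.iterate_succ_apply', fwdDiff, Nat.cast_add, Nat.cast_one, add_mul, one_mul,
      smul_sub, add_smul]
    abel

lemma fwdDiff_iter_pow_zero {R : Type*} [CommRing R] (k m : ℕ) :
    (fwdDiff 1)^[m] (fun r : R ↦ r ^ k) 0 = (m.factorial : R) * (Nat.stirlingSecond k m : R) := by
  induction k generalizing m with
  | zero =>
    cases m with
    | zero => simp
    | succ m =>
      rw [fwdDiff_iter_pow_eq_zero_of_lt m.succ_pos]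
      simp
  | succ k ih =>
    cases m with
    | zero => simp
    | succ m =>
      have hpow : (fun r : R ↦ r ^ (k + 1)) = fun r ↦ r • r ^ k :=
        funext fun r ↦ pow_succ' r k
      rw [hpow, fwdDiff_iter_id_smul, ih, ih, Nat.stirlingSecond_succ_succ, Nat.factorial_succ]
      push_cast [smul_eq_mul]
      ring

lemma S2_eq_stirlingSecond {k : ℕ} (hk : k ≠ 0) (m : ℕ) : S2 k m = Nat.stirlingSecond k m := by
  have hsum := fwdDiff_iter_eq_sum_shift (1 : ℝ) (fun r ↦ r ^ k) m 0
  rw [fwdDiff_iter_pow_zero, range_eq_Ico, sum_eq_sum_Ico_succ_bot m.succ_pos] at hsum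
  have hfac : (m.factorial : ℝ) ≠ 0 := by positivity
  rw [S2, one_div, inv_mul_eq_iff_eq_mul₀ hfac, hsum]
  simp [hk, ← Ico_succ_right_eq_Icc]

-- Under `y' = y * (1 - y)` the factor `(ℓ + 1) * v ^ ℓ * (v * (1 - v))` is the derivative of
-- `y ^ (ℓ + 1)` where `y = v`.
lemma sum_stirlingSecond_logistic_recurrence {R : Type*} [CommRing R] (m : ℕ) (v : R) :
    ∑ ℓ ∈ range (m + 1), (-1) ^ ℓ * (ℓ.factorial : R) * (Nat.stirlingSecond (m + 1) (ℓ + 1) : R) *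
        ((ℓ + 1) * v ^ ℓ * (v * (1 - v))) =
      ∑ ℓ ∈ range (m + 2), (-1) ^ ℓ * (ℓ.factorial : R) *
        (Nat.stirlingSecond (m + 2) (ℓ + 1) : R) * v ^ (ℓ + 1) := by
  have hlast : Nat.stirlingSecond (m + 1) (m + 2) = 0 :=
    Nat.stirlingSecond_eq_zero_of_lt (Nat.lt_succ_self _)
  calc
    _ = ∑ ℓ ∈ range (m + 1), (-1) ^ ℓ * (ℓ.factorial : R) *
          ((ℓ + 1) * Nat.stirlingSecond (m + 1) (ℓ + 1) : R) * v ^ (ℓ + 1) +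
        ∑ ℓ ∈ range (m + 1), (-1) ^ (ℓ + 1) * ((ℓ + 1).factorial : R) *
          (Nat.stirlingSecond (m + 1) (ℓ + 1) : R) * v ^ (ℓ + 2) := by
      rw [← sum_add_distrib]
      refine sum_congr rfl fun ℓ _ ↦ ?_
      rw [Nat.factorial_succ]
      push_cast
      ring
    _ = ∑ ℓ ∈ range (m + 2), (-1) ^ ℓ * (ℓ.factorial : R) *
          ((ℓ + 1) * Nat.stirlingSecond (m + 1) (ℓ + 1) : R) * v ^ (ℓ + 1) +
        ∑ ℓ ∈ range (m + 2), (-1) ^ ℓ * (ℓ.factorial : R) *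
          (Nat.stirlingSecond (m + 1) ℓ : R) * v ^ (ℓ + 1) := by
      congr 1
      · simp [sum_range_succ _ (m + 1), hlast]
      · simp [sum_range_succ' _ (m + 1)]
    _ = _ := by
      rw [← sum_add_distrib]
      refine sum_congr rfl fun ℓ _ ↦ ?_
      rw [Nat.stirlingSecond_succ_succ (m + 1) ℓ]
      push_cast
      ring

lemma iteratedDeriv_eq_sum_of_logistic {𝕜 𝔸 : Type*} [NontriviallyNormedField 𝕜]
    [NormedCommRing 𝔸] [NormedAlgebra 𝕜 𝔸] {y : 𝕜 → 𝔸}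
    (hy : ∀ t, HasDerivAt y (y t * (1 - y t)) t) (m : ℕ) (t : 𝕜) :
    iteratedDeriv m y t = ∑ ℓ ∈ range (m + 1),
      (-1) ^ ℓ * (ℓ.factorial : 𝔸) * (Nat.stirlingSecond (m + 1) (ℓ + 1) : 𝔸) *
        y t ^ (ℓ + 1) := by
  induction m generalizing t with
  | zero => simp [Nat.stirlingSecond_self]
  | succ m ih =>
    have hderiv := HasDerivAt.fun_sum (u := range (m + 1)) fun ℓ _ ↦
      ((hy t).fun_pow (ℓ + 1)).const_mul
        ((-1) ^ ℓ * (ℓ.factorial : 𝔸) * (Nat.stirlingSecond (m + 1) (ℓ + 1) : 𝔸))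
    rw [iteratedDeriv_succ, funext ih, hderiv.deriv, ← sum_stirlingSecond_logistic_recurrence]
    simp only [Nat.cast_add, Nat.cast_one, Nat.add_sub_cancel]

lemma two_mul_iteratedDeriv_sigmoid_zero (m : ℕ) :
    2 * iteratedDeriv m sigmoid 0 = ∑ ℓ ∈ Icc 1 (m + 1),
      ((-1) ^ (ℓ - 1) * ((ℓ - 1).factorial : ℝ) / 2 ^ (ℓ - 1)) * S2 (m + 1) ℓ := by
  rw [iteratedDeriv_eq_sum_of_logistic hasDerivAt_sigmoid, mul_sum, sigmoid_zero,
    ← Ico_succ_right_eq_Icc, sum_Ico_eq_sum_range]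
  refine sum_congr rfl fun ℓ _ ↦ ?_
  rw [S2_eq_stirlingSecond m.succ_ne_zero, add_comm 1 ℓ, Nat.add_sub_cancel, pow_succ, inv_pow]
  field_simp

lemma iteratedDeriv_exp_const_mul_mul {n : ℕ} {g : ℝ → ℝ} {t : ℝ} (hg : ContDiffAt ℝ n g t)
    (x : ℝ) :
    iteratedDeriv n (fun s ↦ exp (x * s) * g s) t =
      exp (x * t) * ∑ k ∈ range (n + 1), (n.choose k : ℝ) * x ^ k * iteratedDeriv (n - k) g t := by
  rw [iteratedDeriv_fun_mul (by fun_prop) hg, mul_sum]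
  refine sum_congr rfl fun k _ ↦ ?_
  rw [iteratedDeriv_exp_const_mul]
  ring

lemma two_mul_exp_div_exp_add_one (x t : ℝ) :
    2 * exp (x * t) / (exp t + 1) = 2 * (exp (x * t) * sigmoid (-t)) := by
  rw [sigmoid_def, neg_neg, add_comm, mul_div_assoc, div_eq_mul_inv]

theorem stmt_13 (n : ℕ) (hn : 1 ≤ n) (x : ℝ) :
    iteratedDeriv n (fun t : ℝ => 2 * Real.exp (x * t) / (Real.exp t + 1)) 0 =
      ∑ k ∈ Finset.range (n + 1),
        (-1 : ℝ) ^ (n - k) * (Nat.choose n k : ℝ) *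
          (∑ ℓ ∈ Finset.Icc 1 (n - k + 1),
            ((-1 : ℝ) ^ (ℓ - 1) * (Nat.factorial (ℓ - 1) : ℝ) / 2 ^ (ℓ - 1)) *
              S2 (n - k + 1) ℓ) *
          x ^ k := by
  have hsmooth : ContDiffAt ℝ n (fun t ↦ sigmoid (-t)) 0 :=
    ((contDiff_sigmoid.of_le le_top).comp contDiff_neg).contDiffAt
  simp only [two_mul_exp_div_exp_add_one]
  rw [iteratedDeriv_const_mul_field, iteratedDeriv_exp_const_mul_mul hsmooth, mul_zero,
    exp_zero, one_mul, mul_sum]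
  refine sum_congr rfl fun k _ ↦ ?_
  rw [iteratedDeriv_comp_neg, neg_zero, smul_eq_mul, ← two_mul_iteratedDeriv_sigmoid_zero]
  ring
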